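/- arXiv:2503.06461 — 2 statements merged into one kernel-verified Lean document; each statement's English description precedes it below -/
import Mathlib

section
/- Let n ≥ 1 be a natural number and η > 0, 0 < ε < η, r ≥ 1 real numbers, and set s = √n·(η−ε). The function g : ℝ → ℝ defined by g(b) = (r/(r+1))·Φ(−s − b) + (1/(r+1))·Φ(−s + b) attains its global minimum at b* = (ln r)/(2s) = (ln r)/(2√n(η−ε)); that is, for every b ∈ ℝ, g(b) ≥ g(b*), with strict inequality whenever b ≠ b*. (Determination of the optimal bias b*_rob of the robust classifier in the proof of Theorem 1.) -/
open MeasureTheory ProbabilityTheory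

/-- The standard normal CDF, real-valued. -/
noncomputable def stdNormalCDF (t : ℝ) : ℝ := (gaussianReal 0 1 (Set.Iic t)).toReal

/-- The overall (robust) error of the uniform-weight linear classifier with bias `b`. -/
noncomputable def mixtureError (r s b : ℝ) : ℝ :=
  (r / (r + 1)) * stdNormalCDF (-s - b) + (1 / (r + 1)) * stdNormalCDF (-s + b)

/-! Writing `φ` for the standard normal density, the derivative of the error in `b` is a positive
multiple of the likelihood ratio `φ (-s + b) / φ (-s - b) = exp (2 * s * b)` minus the prior odds
`r`. As `s > 0`, the ratio increases with `b`, so the derivative changes sign only once, from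
negative to positive, where `2 * s * b = log r`. -/

open Set

open scoped NNReal

theorem lt_of_deriv_neg_of_deriv_pos {f : ℝ → ℝ} {a b : ℝ} (ha : ContinuousAt f a)
    (hneg : ∀ x < a, deriv f x < 0) (hpos : ∀ x > a, 0 < deriv f x) (hb : b ≠ a) :
    f a < f b := by
  have hcont : Continuous f := continuous_iff_continuousAt.2 fun x ↦ by
    rcases lt_trichotomy x a with hx | rfl | hx
    · exact (differentiableAt_of_deriv_ne_zero (hneg x hx).ne).continuousAt
    · exact ha
    · exact (differentiableAt_of_deriv_ne_zero (hpos x hx).ne').continuousAt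
  rcases hb.lt_or_gt with hba | hab
  · have hanti : StrictAntiOn f (Iic a) :=
      strictAntiOn_of_deriv_neg (convex_Iic a) hcont.continuousOn <| by simpa using hneg
    exact hanti hba.le self_mem_Iic hba
  · have hmono : StrictMonoOn f (Ici a) :=
      strictMonoOn_of_deriv_pos (convex_Ici a) hcont.continuousOn <| by simpa using hpos
    exact hmono self_mem_Ici hab.le hab

theorem hasDerivAt_setIntegral_Iic {E : Type*} [NormedAddCommGroup E] [NormedSpace ℝ E]
    [CompleteSpace E] {f : ℝ → E} {a : ℝ} (hf : Integrable f) (ha : ContinuousAt f a) :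
    HasDerivAt (fun u ↦ ∫ x in Iic u, f x) (f a) a := by
  have hsplit (u : ℝ) : ∫ x in Iic u, f x = (∫ x in Iic a, f x) + ∫ x in a..u, f x := by
    rw [← intervalIntegral.integral_Iic_sub_Iic hf.integrableOn hf.integrableOn,
      add_sub_cancel]
  rw [funext hsplit]
  exact (intervalIntegral.integral_hasDerivAt_right hf.intervalIntegrable
    hf.aestronglyMeasurable.stronglyMeasurableAtFilter ha).const_add _

theorem continuous_gaussianPDFReal (μ : ℝ) (v : ℝ≥0) : Continuous (gaussianPDFReal μ v) := by
  unfold gaussianPDFReal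
  fun_prop

theorem gaussianPDFReal_add_eq_sub_mul_exp (μ : ℝ) (v : ℝ≥0) (x y : ℝ) :
    gaussianPDFReal μ v (x + y) =
      gaussianPDFReal μ v (x - y) * Real.exp (2 * (μ - x) * y / v) := by
  rw [gaussianPDFReal, gaussianPDFReal, mul_assoc _ (Real.exp _), ← Real.exp_add]
  congr 2
  ring

theorem hasDerivAt_cdf_gaussianReal (μ : ℝ) {v : ℝ≥0} (hv : v ≠ 0) (t : ℝ) :
    HasDerivAt (cdf (gaussianReal μ v)) (gaussianPDFReal μ v t) t := by
  have hcdf : cdf (gaussianReal μ v) = fun u ↦ ∫ x in Iic u, gaussianPDFReal μ v x := by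
    ext u
    rw [cdf_eq_real, measureReal_def, gaussianReal_apply_eq_integral μ hv,
      ENNReal.toReal_ofReal (integral_nonneg (gaussianPDFReal_nonneg μ v))]
  rw [hcdf]
  exact hasDerivAt_setIntegral_Iic (integrable_gaussianPDFReal μ v)
    (continuous_gaussianPDFReal μ v).continuousAt

theorem stdNormalCDF_eq_cdf : stdNormalCDF = cdf (gaussianReal 0 1) :=
  funext fun t ↦ (cdf_eq_real (gaussianReal 0 1) t).symm

theorem hasDerivAt_stdNormalCDF (t : ℝ) :
    HasDerivAt stdNormalCDF (gaussianPDFReal 0 1 t) t :=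
  stdNormalCDF_eq_cdf ▸ hasDerivAt_cdf_gaussianReal 0 one_ne_zero t

theorem hasDerivAt_mixtureError (r s b : ℝ) :
    HasDerivAt (mixtureError r s)
      (gaussianPDFReal 0 1 (-s - b) / (r + 1) * (Real.exp (2 * s * b) - r)) b := by
  have hposClass :=
    ((hasDerivAt_stdNormalCDF (-s - b)).comp_const_sub (-s) b).const_mul (r / (r + 1))
  have hnegClass :=
    ((hasDerivAt_stdNormalCDF (-s + b)).comp_const_add (-s) b).const_mul (1 / (r + 1))
  have hratio : gaussianPDFReal 0 1 (-s + b) =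
      gaussianPDFReal 0 1 (-s - b) * Real.exp (2 * s * b) := by
    simpa using gaussianPDFReal_add_eq_sub_mul_exp 0 1 (-s) b
  refine (hposClass.add hnegClass).congr_deriv ?_
  rw [hratio]
  ring

section

variable {r s b : ℝ}

theorem deriv_mixtureError_neg (hr : 0 < r) (hs : 0 < s) (hb : b < Real.log r / (2 * s)) :
    deriv (mixtureError r s) b < 0 := by
  have hpdf := gaussianPDFReal_pos 0 1 (-s - b) one_ne_zero
  have hexp : Real.exp (2 * s * b) < r :=
    (Real.lt_log_iff_exp_lt hr).1 ((lt_div_iff₀' (by positivity)).1 hb)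
  rw [(hasDerivAt_mixtureError r s b).deriv]
  exact mul_neg_of_pos_of_neg (by positivity) (sub_neg.2 hexp)

theorem deriv_mixtureError_pos (hr : 0 < r) (hs : 0 < s) (hb : Real.log r / (2 * s) < b) :
    0 < deriv (mixtureError r s) b := by
  have hpdf := gaussianPDFReal_pos 0 1 (-s - b) one_ne_zero
  have hexp : r < Real.exp (2 * s * b) :=
    (Real.log_lt_iff_lt_exp hr).1 ((div_lt_iff₀' (by positivity)).1 hb)
  rw [(hasDerivAt_mixtureError r s b).deriv]
  exact mul_pos (by positivity) (sub_pos.2 hexp)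

end

theorem optimal_bias_robust_general {r s : ℝ} (hr : 0 < r) (hs : 0 < s) (b : ℝ) :
    mixtureError r s b ≥ mixtureError r s (Real.log r / (2 * s)) ∧
    (b ≠ Real.log r / (2 * s) →
      mixtureError r s b > mixtureError r s (Real.log r / (2 * s))) := by
  have hlt (hb : b ≠ Real.log r / (2 * s)) :
      mixtureError r s (Real.log r / (2 * s)) < mixtureError r s b :=
    lt_of_deriv_neg_of_deriv_pos (hasDerivAt_mixtureError r s _).continuousAt
      (fun _ ↦ deriv_mixtureError_neg hr hs) (fun _ ↦ deriv_mixtureError_pos hr hs) hb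
  refine ⟨?_, hlt⟩
  rcases eq_or_ne b (Real.log r / (2 * s)) with rfl | hb
  · exact le_rfl
  · exact (hlt hb).le

/-- The optimal robust bias: `b* = (ln r)/(2s)` with `s = √n·(η−ε)` is the global minimizer
of the overall robust error, strictly so away from `b*`. -/
theorem optimal_bias_robust (n : ℕ) (hn : 1 ≤ n) (η ε r : ℝ) (hη : 0 < η)
    (hε : 0 < ε) (hεη : ε < η) (hr : 1 ≤ r) (b : ℝ) :
    mixtureError r (Real.sqrt n * (η - ε)) b ≥
      mixtureError r (Real.sqrt n * (η - ε)) (Real.log r / (2 * (Real.sqrt n * (η - ε)))) ∧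
    (b ≠ Real.log r / (2 * (Real.sqrt n * (η - ε))) →
      mixtureError r (Real.sqrt n * (η - ε)) b >
        mixtureError r (Real.sqrt n * (η - ε)) (Real.log r / (2 * (Real.sqrt n * (η - ε))))) := by
  have hs : 0 < Real.sqrt n * (η - ε) :=
    mul_pos (Real.sqrt_pos.2 (Nat.cast_pos.2 hn)) (sub_pos.2 hεη)
  exact optimal_bias_robust_general (zero_lt_one.trans_le hr) hs b
end

section
/- Let n ≥ 1 be a natural number, η ∈ ℝ, r ≥ 1 and b ∈ ℝ, and let w ∈ ℝ^n with w ≠ 0. Let μ₊ (resp. μ₋) be the n-fold product on ℝ^n of the real Gaussian measure with mean +η (resp. −η) and variance 1. Then the overall standard error of the linear classifier f_{w,b}, namely (r/(r+1))·μ₊({x : ∑_k w_k x_k + b < 0}) + (1/(r+1))·μ₋({x : ∑_k w_k x_k + b > 0}), equals (r/(r+1))·Φ((−η·∑_k w_k − b)/‖w‖₂) + (1/(r+1))·Φ((−η·∑_k w_k + b)/‖w‖₂), where ‖w‖₂ = √(∑_k w_k²). (Closed-form overall standard error of an arbitrary linear classifier on the Gaussian mixture, the key identity behind Lemma 1.)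 -/
/-!
An affine form `∑ k, w k * x k + b` in independent Gaussian coordinates is itself Gaussian, with
means adding as `w k * m k` and variances as `w k ^ 2 * v k`. Each misclassification event is a
tail event of this one real variable, so standardizing it, and reflecting it for the upper tail,
expresses the error through the standard normal CDF.
-/

open MeasureTheory ProbabilityTheory

open scoped NNReal

section GaussianLaw

variable {Ω : Type*} {mΩ : MeasurableSpace Ω} {P : Measure Ω}

lemma hasLaw_finsetSum_gaussianReal {ι : Type*} {X : ι → Ω → ℝ} {m : ι → ℝ} {v : ι → ℝ≥0}
    (hindep : iIndepFun X P) (hlaw : ∀ i, HasLaw (X i) (gaussianReal (m i) (v i)) P)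
    (s : Finset ι) :
    HasLaw (∑ i ∈ s, X i) (gaussianReal (∑ i ∈ s, m i) (∑ i ∈ s, v i)) P := by
  classical
  induction s using Finset.induction_on with
  | empty =>
    have := hindep.isProbabilityMeasure
    simpa only [Finset.sum_empty, gaussianReal_zero_var] using
      hasLaw_dirac_of_ae_eq (X := (0 : Ω → ℝ)) (x := 0) (Filter.EventuallyEq.refl (ae P) 0)
  | insert i s his ih =>
    have hindep_sum : IndepFun (X i) (∑ j ∈ s, X j) P :=
      (hindep.indepFun_finsetSum_of_notMem₀ (fun j ↦ (hlaw j).aemeasurable) his).symm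
    simpa only [Finset.sum_insert his, gaussianReal_conv_gaussianReal] using
      hindep_sum.hasLaw_add (hlaw i) ih

lemma hasLaw_standardize_gaussianReal {X : Ω → ℝ} {μ : ℝ} {v : ℝ≥0}
    (hX : HasLaw X (gaussianReal μ v) P) (hv : v ≠ 0) :
    HasLaw (fun ω ↦ (X ω - μ) / √v) (gaussianReal 0 1) P := by
  have hvar : v / .mk (√v ^ 2) (sq_nonneg _) = 1 := by
    ext
    simp [hv]
  simpa only [sub_self, zero_div, hvar] using
    gaussianReal_div_const (gaussianReal_sub_const hX μ) √v

lemma stdNormalCDF_eq_measure_Iio (t : ℝ) :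
    stdNormalCDF t = (gaussianReal 0 1 (Set.Iio t)).toReal := by
  have := nullSingletonClass_gaussianReal (μ := 0) one_ne_zero
  rw [stdNormalCDF, measure_congr Iio_ae_eq_Iic]

lemma measure_lt_eq_stdNormalCDF {X : Ω → ℝ} {μ : ℝ} {v : ℝ≥0}
    (hX : HasLaw X (gaussianReal μ v) P) (hv : v ≠ 0) (a : ℝ) :
    (P {ω | X ω < a}).toReal = stdNormalCDF ((a - μ) / √v) := by
  have hsd : 0 < √(v : ℝ) := Real.sqrt_pos.mpr (NNReal.coe_pos.mpr (pos_iff_ne_zero.mpr hv))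
  have hset : {ω | X ω < a} = {ω | (X ω - μ) / √v < (a - μ) / √v} := by
    simp only [div_lt_div_iff_of_pos_right hsd, sub_lt_sub_iff_right]
  rw [hset, stdNormalCDF_eq_measure_Iio]
  exact congrArg ENNReal.toReal
    ((hasLaw_standardize_gaussianReal hX hv).measure_eq measurableSet_Iio)

lemma measure_gt_eq_stdNormalCDF {X : Ω → ℝ} {μ : ℝ} {v : ℝ≥0}
    (hX : HasLaw X (gaussianReal μ v) P) (hv : v ≠ 0) (a : ℝ) :
    (P {ω | a < X ω}).toReal = stdNormalCDF ((μ - a) / √v) := by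
  simpa only [Pi.neg_apply, neg_lt_neg_iff, neg_sub_neg] using
    measure_lt_eq_stdNormalCDF (gaussianReal_neg hX) hv (-a)

end GaussianLaw

section ProductGaussian

variable {ι : Type*} [Fintype ι]

lemma hasLaw_affine_pi_gaussianReal (m : ι → ℝ) (v : ι → ℝ≥0) (w : ι → ℝ) (b : ℝ) :
    HasLaw (fun x : ι → ℝ ↦ ∑ k, w k * x k + b)
      (gaussianReal (∑ k, w k * m k + b) (∑ k, .mk (w k ^ 2) (sq_nonneg _) * v k))
      (Measure.pi fun k ↦ gaussianReal (m k) (v k)) := by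
  let P := Measure.pi fun k ↦ gaussianReal (m k) (v k)
  have hindep : iIndepFun (fun k (x : ι → ℝ) ↦ w k * x k) P :=
    iIndepFun_pi (X := fun k y ↦ w k * y) fun k ↦ (measurable_const_mul (w k)).aemeasurable
  have hcoord (k : ι) : HasLaw (fun x : ι → ℝ ↦ x k) (gaussianReal (m k) (v k)) P :=
    (measurePreserving_eval (fun k ↦ gaussianReal (m k) (v k)) k).hasLaw
  have hsum := hasLaw_finsetSum_gaussianReal hindep
    (fun k ↦ gaussianReal_const_mul (hcoord k) (w k)) Finset.univ
  simpa only [Finset.sum_apply] using gaussianReal_add_const hsum b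

variable {m w : ι → ℝ} {v : ι → ℝ≥0}

lemma variance_affine_ne_zero (hw : ∃ k, w k ≠ 0 ∧ v k ≠ 0) :
    ∑ k, .mk (w k ^ 2) (sq_nonneg _) * v k ≠ 0 := by
  simpa [Finset.sum_eq_zero_iff, ← NNReal.coe_eq_zero] using hw

lemma pi_gaussianReal_affine_lt_zero (hw : ∃ k, w k ≠ 0 ∧ v k ≠ 0) (b : ℝ) :
    (Measure.pi (fun k ↦ gaussianReal (m k) (v k)) {x | ∑ k, w k * x k + b < 0}).toReal =
      stdNormalCDF ((-∑ k, w k * m k - b) / √(∑ k, w k ^ 2 * v k)) := by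
  simpa [sub_eq_add_neg, add_comm] using
    measure_lt_eq_stdNormalCDF (hasLaw_affine_pi_gaussianReal m v w b)
      (variance_affine_ne_zero hw) 0

lemma pi_gaussianReal_affine_gt_zero (hw : ∃ k, w k ≠ 0 ∧ v k ≠ 0) (b : ℝ) :
    (Measure.pi (fun k ↦ gaussianReal (m k) (v k)) {x | 0 < ∑ k, w k * x k + b}).toReal =
      stdNormalCDF ((∑ k, w k * m k + b) / √(∑ k, w k ^ 2 * v k)) := by
  simpa using
    measure_gt_eq_stdNormalCDF (hasLaw_affine_pi_gaussianReal m v w b)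
      (variance_affine_ne_zero hw) 0

theorem overall_standard_error_closed_form_general (p q b : ℝ) {m₁ m₂ : ι → ℝ} {v₁ v₂ : ι → ℝ≥0}
    (hw₁ : ∃ k, w k ≠ 0 ∧ v₁ k ≠ 0) (hw₂ : ∃ k, w k ≠ 0 ∧ v₂ k ≠ 0) :
    p * (Measure.pi (fun k ↦ gaussianReal (m₁ k) (v₁ k)) {x | ∑ k, w k * x k + b < 0}).toReal +
      q * (Measure.pi (fun k ↦ gaussianReal (m₂ k) (v₂ k)) {x | 0 < ∑ k, w k * x k + b}).toReal =
      p * stdNormalCDF ((-∑ k, w k * m₁ k - b) / √(∑ k, w k ^ 2 * v₁ k)) +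
        q * stdNormalCDF ((∑ k, w k * m₂ k + b) / √(∑ k, w k ^ 2 * v₂ k)) := by
  rw [pi_gaussianReal_affine_lt_zero hw₁, pi_gaussianReal_affine_gt_zero hw₂]

end ProductGaussian

/-- Closed-form overall standard error of an arbitrary linear classifier on the Gaussian
mixture (key identity behind Lemma 1). -/
theorem overall_standard_error_closed_form (n : ℕ) (hn : 1 ≤ n) (η r b : ℝ) (hr : 1 ≤ r)
    (w : Fin n → ℝ) (hw : w ≠ 0) :
    (r / (r + 1)) *
        ((Measure.pi fun _ : Fin n => gaussianReal η 1)
          {x : Fin n → ℝ | (∑ k, w k * x k) + b < 0}).toReal +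
      (1 / (r + 1)) *
        ((Measure.pi fun _ : Fin n => gaussianReal (-η) 1)
          {x : Fin n → ℝ | (∑ k, w k * x k) + b > 0}).toReal
      = (r / (r + 1)) *
          stdNormalCDF ((-η * ∑ k, w k - b) / Real.sqrt (∑ k, (w k) ^ 2)) +
        (1 / (r + 1)) *
          stdNormalCDF ((-η * ∑ k, w k + b) / Real.sqrt (∑ k, (w k) ^ 2)) := by
  have hw' : ∃ k, w k ≠ 0 ∧ (1 : ℝ≥0) ≠ 0 := by simpa using Function.ne_iff.mp hw
  simpa [← Finset.sum_mul, mul_comm η] using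
    overall_standard_error_closed_form_general (r / (r + 1)) (1 / (r + 1)) b
      (m₁ := fun _ ↦ η) (m₂ := fun _ ↦ -η) hw' hw'
end
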